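/- Let 𝒳, 𝒴, 𝒵, ℳ be finite sets, P_{XYZ}, Q_{XYZ} pmfs, and let (M, X^n, Y^n, Z^n) be distributed under P as P_{M|X^n} ∏_{i=1}^n P_{X_i Y_i Z_i} and under Q as P_{M|X^n} ∏_{i=1}^n Q_{X_i Y_i Z_i} (same channel). Then for every 0 ≤ i ≤ n, D(P_{M Y^i Z_{i+1}^n} ‖ Q_{M Y^i Z_{i+1}^n}) ≤ i · D(P_{XY} ‖ Q_{XY}) + (n−i) · D(P_{XZ} ‖ Q_{XZ}) (in the extended reals); in particular all these divergences are finite when D(P_{XY}‖Q_{XY}) < ∞ and D(P_{XZ}‖Q_{XZ}) < ∞. -/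

import Mathlib

open scoped BigOperators

noncomputable section

open Classical in
/-- Pushforward of a finitely supported mass function along a map. -/
def pushf {Ω α : Type*} [Fintype Ω] (p : Ω → ℝ) (f : Ω → α) : α → ℝ :=
  fun a => ∑ ω, if f ω = a then p ω else 0

/-- `p` is a probability mass function. -/
def IsPMF {α : Type*} [Fintype α] (p : α → ℝ) : Prop :=
  (∀ a, 0 ≤ p a) ∧ ∑ a, p a = 1

/-- Kullback–Leibler divergence `D(p‖q)` of mass functions, valued in `EReal`
(equal to `⊤` if `p` is not absolutely continuous w.r.t. `q`). -/
def klDiv {α : Type*} [Fintype α] (p q : α → ℝ) : EReal :=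
  if ∀ a, q a = 0 → p a = 0 then ((∑ a, p a * Real.log (p a / q a) : ℝ) : EReal) else ⊤

/-- Shannon entropy. -/
def entropy {α : Type*} [Fintype α] (p : α → ℝ) : ℝ :=
  -∑ a, p a * Real.log (p a)

/-- Conditional mutual information `I(A;B|C)` under the mass function `p`. -/
def condMI {Ω α β γ : Type*} [Fintype Ω] [Fintype α] [Fintype β] [Fintype γ]
    (p : Ω → ℝ) (A : Ω → α) (B : Ω → β) (C : Ω → γ) : ℝ :=
  entropy (pushf p (fun ω => (A ω, C ω))) + entropy (pushf p (fun ω => (B ω, C ω)))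
    - entropy (pushf p (fun ω => (A ω, B ω, C ω))) - entropy (pushf p C)

/-- First marginal of a joint mass function. -/
def margFst {α β : Type*} [Fintype α] [Fintype β] (p : α × β → ℝ) : α → ℝ :=
  fun a => ∑ b, p (a, b)

/-- Conditional mass function of the second coordinate given the first. -/
def condSnd {α β : Type*} [Fintype α] [Fintype β] (p : α × β → ℝ) : α → β → ℝ :=
  fun a b => p (a, b) / margFst p a

/-- Output distribution of a channel on an input distribution. -/
def outDist {α β : Type*} [Fintype α] [Fintype β] (ch : α → β → ℝ) (pa : α → ℝ) : β → ℝ :=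
  fun b => ∑ a, pa a * ch a b

/-- The difference functional
`f(P'_X) = sup_{Q̂_X ≪ Q_X} D(P'_Y‖Q̂_Y) − D(P'_Z‖Q̂_Z)`. -/
def fdiff {X Y Z : Type*} [Fintype X] [Fintype Y] [Fintype Z]
    (pYgX : X → Y → ℝ) (pZgX : X → Z → ℝ) (qYgX : X → Y → ℝ) (qZgX : X → Z → ℝ)
    (qX : X → ℝ) (pX' : X → ℝ) : EReal :=
  sSup {d : EReal | ∃ qhX : X → ℝ, IsPMF qhX ∧ (∀ x, qX x = 0 → qhX x = 0) ∧
    d = klDiv (outDist pYgX pX') (outDist qYgX qhX)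
        - klDiv (outDist pZgX pX') (outDist qZgX qhX)}

/-- The quantity `G_{P_XY, Q_XY, P_XZ, Q_XZ}(R)`: the supremum over finite sets `𝒰`
(represented by `Fin m`) and channels `P_{U|X}` with `I_P(U;X|Y) ≤ R` and `I_P(U;X|Z) ≤ R`
of `∑_u P_U(u) f(P_{X|U}(·|u))`. -/
def Gexp {X Y Z : Type*} [Fintype X] [Fintype Y] [Fintype Z]
    (pXY : X × Y → ℝ) (qXY : X × Y → ℝ) (pXZ : X × Z → ℝ) (qXZ : X × Z → ℝ)
    (R : ℝ) : EReal :=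
  sSup {v : EReal | ∃ (m : ℕ) (ch : X → Fin m → ℝ),
    (∀ x, IsPMF (ch x)) ∧
    condMI (fun w : Fin m × X × Y => ch w.2.1 w.1 * pXY (w.2.1, w.2.2))
      (fun w => w.1) (fun w => w.2.1) (fun w => w.2.2) ≤ R ∧
    condMI (fun w : Fin m × X × Z => ch w.2.1 w.1 * pXZ (w.2.1, w.2.2))
      (fun w => w.1) (fun w => w.2.1) (fun w => w.2.2) ≤ R ∧
    v = ∑ u : Fin m,
      ((∑ x, ch x u * margFst pXY x : ℝ) : EReal) *
        fdiff (condSnd pXY) (condSnd pXZ) (condSnd qXY) (condSnd qXZ)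
          (margFst qXY)
          (fun x => ch x u * margFst pXY x / ∑ x', ch x' u * margFst pXY x')}

/-- The error exponent of distributed hypothesis testing, via the Ahlswede–Csiszár
multi-letter characterization. -/
def errExp {X W : Type*} [Fintype X] [Fintype W]
    (pXW qXW : X × W → ℝ) (R : ℝ) : EReal :=
  sSup {v : EReal | ∃ n : ℕ, 0 < n ∧
    ∃ κ : (Fin n → X) → Fin (2 ^ ⌊(n : ℝ) * R⌋₊) → ℝ,
      (∀ x, IsPMF (κ x)) ∧
      v = (((n : ℝ)⁻¹ : ℝ) : EReal) *
        klDiv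
          (fun mw : Fin (2 ^ ⌊(n : ℝ) * R⌋₊) × (Fin n → W) =>
            ∑ x : Fin n → X, (∏ i, pXW (x i, mw.2 i)) * κ x mw.1)
          (fun mw : Fin (2 ^ ⌊(n : ℝ) * R⌋₊) × (Fin n → W) =>
            ∑ x : Fin n → X, (∏ i, qXW (x i, mw.2 i)) * κ x mw.1)}

theorem pushf_sum_mul {Ω α : Type*} [Fintype Ω] [Fintype α] (p : Ω → ℝ) (f : Ω → α) (h : α → ℝ) :
    ∑ a, pushf p f a * h a = ∑ ω, p ω * h (f ω) := by
  classical
  simp only [pushf, Finset.sum_mul]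
  rw [Finset.sum_comm]
  refine Finset.sum_congr rfl fun ω _ => ?_
  simp [ite_mul]

theorem pushf_nonneg {Ω α : Type*} [Fintype Ω] (p : Ω → ℝ) (hp : ∀ ω, 0 ≤ p ω) (f : Ω → α) (a : α) :
    0 ≤ pushf p f a := by
  unfold pushf
  refine Finset.sum_nonneg fun ω _ => ?_
  split_ifs
  · exact hp ω
  · exact le_rfl

theorem le_pushf {Ω α : Type*} [Fintype Ω] (p : Ω → ℝ) (hp : ∀ ω, 0 ≤ p ω) (f : Ω → α) (ω : Ω) :
    p ω ≤ pushf p f (f ω) := by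
  classical
  have := Finset.single_le_sum (f := fun ω' => if f ω' = f ω then p ω' else 0) (s := Finset.univ)
    (fun ω' _ => by split_ifs; exacts [hp _, le_rfl]) (Finset.mem_univ ω)
  simp only [if_true] at this
  unfold pushf
  convert this

theorem pushf_pushf {Ω α β : Type*} [Fintype Ω] [Fintype α] (p : Ω → ℝ) (f : Ω → α) (g : α → β) :
    pushf (pushf p f) g = pushf p (fun ω => g (f ω)) := by
  classical
  funext b
  have := pushf_sum_mul p f (fun a => if g a = b then 1 else 0)
  simp only [mul_ite, mul_one, mul_zero] at this
  rw [pushf, pushf]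
  convert this

theorem pushf_ac {Ω α : Type*} [Fintype Ω] (p q : Ω → ℝ) (hq : ∀ ω, 0 ≤ q ω)
    (f : Ω → α) (hac : ∀ ω, q ω = 0 → p ω = 0) (a : α) (h : pushf q f a = 0) :
    pushf p f a = 0 := by
  unfold pushf
  refine Finset.sum_eq_zero fun ω _ => ?_
  split_ifs with hω
  · subst hω
    exact hac ω (le_antisymm (h ▸ le_pushf q hq f ω) (hq ω))
  · rfl

theorem klDiv_pushf_le {Ω α : Type*} [Fintype Ω] [Fintype α] (p q : Ω → ℝ)
    (hp : ∀ ω, 0 ≤ p ω) (hq : ∀ ω, 0 ≤ q ω) (f : Ω → α) :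
    klDiv (pushf p f) (pushf q f) ≤ klDiv p q := by
  by_cases hac : ∀ ω, q ω = 0 → p ω = 0
  swap
  · rw [klDiv, klDiv, if_neg hac]; exact le_top
  have hac2 := pushf_ac p q hq f hac
  rw [klDiv, klDiv, if_pos hac, if_pos hac2, EReal.coe_le_coe_iff,
    pushf_sum_mul p f (fun a => Real.log (pushf p f a / pushf q f a))]
  set F := pushf p f with hF
  set G := pushf q f with hG
  have h1 : ∑ ω, q ω * (F (f ω) / G (f ω)) = ∑ ω, p ω := by
    rw [← pushf_sum_mul q f (fun a => F a / G a)]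
    have h2 := pushf_sum_mul p f (fun _ => 1)
    simp only [mul_one] at h2
    rw [← h2]
    refine Finset.sum_congr rfl fun a _ => ?_
    by_cases hG0 : G a = 0
    · rw [hac2 a hG0, ← hF, hac2 a hG0]; simp
    · rw [← hG, ← hF]; field_simp
  have key : ∀ ω, p ω * Real.log (F (f ω) / G (f ω)) + p ω - q ω * (F (f ω) / G (f ω))
      ≤ p ω * Real.log (p ω / q ω) := by
    intro ω
    rcases (hp ω).eq_or_lt with h0 | hpos
    · rw [← h0]
      have : 0 ≤ q ω * (F (f ω) / G (f ω)) :=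
        mul_nonneg (hq ω) (div_nonneg (pushf_nonneg p hp f _) (pushf_nonneg q hq f _))
      simp only [zero_mul]; linarith
    · have hqpos : 0 < q ω := lt_of_le_of_ne (hq ω) fun h => hpos.ne' (hac ω h.symm)
      have hFpos : 0 < F (f ω) := hpos.trans_le (le_pushf p hp f ω)
      have hGpos : 0 < G (f ω) := hqpos.trans_le (le_pushf q hq f ω)
      set r := F (f ω) / G (f ω) with hr
      have hrpos : 0 < r := div_pos hFpos hGpos
      have h3 := Real.log_le_sub_one_of_pos (x := r * q ω / p ω) (by positivity)
      rw [Real.log_div (by positivity) (by positivity), Real.log_mul (by positivity) (by positivity)] at h3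
      rw [Real.log_div hpos.ne' hqpos.ne']
      have h4 := mul_le_mul_of_nonneg_left h3 hpos.le
      have h5 : p ω * (r * q ω / p ω - 1) = q ω * r - p ω := by field_simp
      rw [h5] at h4
      linarith
  have := Finset.sum_le_sum fun ω (_ : ω ∈ Finset.univ) => key ω
  rw [Finset.sum_sub_distrib, Finset.sum_add_distrib, h1] at this
  linarith

theorem sum_prod_mul {n : ℕ} {A : Type*} [Fintype A] (p : Fin n → A → ℝ)
    (hp : ∀ j, ∑ a, p j a = 1) (j : Fin n) (L : A → ℝ) :
    ∑ a : Fin n → A, (∏ k, p k (a k)) * L (a j) = ∑ b, p j b * L b := by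
  classical
  have h := Finset.prod_univ_sum (fun _ : Fin n => (Finset.univ : Finset A))
    (fun k b => p k b * if k = j then L b else 1)
  simp only [Fintype.piFinset_univ, Finset.prod_mul_distrib, Finset.prod_ite_eq',
    Finset.mem_univ, if_true] at h
  rw [← h, ← Finset.mul_prod_erase Finset.univ _ (Finset.mem_univ j)]
  rw [Finset.prod_eq_one]
  · simp
  · intro k hk
    simp [Finset.ne_of_mem_erase hk, hp]

theorem ereal_sum_ne_bot {ι : Type*} (s : Finset ι) (f : ι → EReal) (h : ∀ i, f i ≠ ⊥) :
    ∑ i ∈ s, f i ≠ ⊥ := by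
  classical
  induction s using Finset.induction_on with
  | empty => simp
  | insert a s ha ih => rw [Finset.sum_insert ha]; simp [EReal.add_eq_bot_iff, h, ih]

theorem klDiv_ne_bot {α : Type*} [Fintype α] (p q : α → ℝ) : klDiv p q ≠ ⊥ := by
  unfold klDiv; split_ifs
  · exact EReal.coe_ne_bot _
  · simp

theorem klDiv_prod_le {n : ℕ} {A M : Type*} [Fintype A] [Fintype M] (p q : Fin n → A → ℝ)
    (hp1 : ∀ j, ∑ a, p j a = 1)
    (κ : (Fin n → A) → M → ℝ) (hκ : ∀ x, IsPMF (κ x)) :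
    klDiv (fun w : M × (Fin n → A) => κ w.2 w.1 * ∏ j, p j (w.2 j))
      (fun w => κ w.2 w.1 * ∏ j, q j (w.2 j)) ≤ ∑ j, klDiv (p j) (q j) := by
  classical
  by_cases hac : ∀ j a, q j a = 0 → p j a = 0
  swap
  · push Not at hac
    obtain ⟨j, a, h1, h2⟩ := hac
    have : klDiv (p j) (q j) = ⊤ := by
      rw [klDiv, if_neg]; exact fun h => h2 (h a h1)
    rw [← Finset.add_sum_erase _ _ (Finset.mem_univ j), this,
      EReal.top_add_of_ne_bot (ereal_sum_ne_bot _ _ fun _ => klDiv_ne_bot _ _)]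
    exact le_top
  have hr : ∀ j, klDiv (p j) (q j) = ((∑ a, p j a * Real.log (p j a / q j a) : ℝ) : EReal) :=
    fun j => by rw [klDiv, if_pos (hac j)]
  simp only [hr]
  rw [klDiv, if_pos]
  swap
  · rintro ⟨m, a⟩ h
    simp only [mul_eq_zero, Finset.prod_eq_zero_iff, Finset.mem_univ, true_and] at h ⊢
    rcases h with h | ⟨j, h⟩
    · exact Or.inl h
    · exact Or.inr ⟨j, hac j _ h⟩
  have hsum : ∀ s : Finset (Fin n), ∀ f : Fin n → ℝ,
      ∑ j ∈ s, ((f j : ℝ) : EReal) = ((∑ j ∈ s, f j : ℝ) : EReal) := by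
    intro s f
    induction s using Finset.induction_on with
    | empty => simp
    | insert a s ha ih => rw [Finset.sum_insert ha, Finset.sum_insert ha, ih, EReal.coe_add]
  rw [hsum, EReal.coe_le_coe_iff]
  apply le_of_eq
  have hterm : ∀ w : M × (Fin n → A),
      (κ w.2 w.1 * ∏ j, p j (w.2 j)) *
        Real.log ((κ w.2 w.1 * ∏ j, p j (w.2 j)) / (κ w.2 w.1 * ∏ j, q j (w.2 j)))
      = κ w.2 w.1 * ((∏ j, p j (w.2 j)) * ∑ j, Real.log (p j (w.2 j) / q j (w.2 j))) := by
    rintro ⟨m, a⟩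
    dsimp only
    by_cases h0 : κ a m = 0
    · simp [h0]
    by_cases h1 : ∏ j, p j (a j) = 0
    · simp [h1]
    rw [mul_div_mul_left _ _ h0, ← Finset.prod_div_distrib, Real.log_prod, mul_assoc]
    intro j _
    have hpj : p j (a j) ≠ 0 := fun h => h1 (Finset.prod_eq_zero (Finset.mem_univ j) h)
    exact div_ne_zero hpj fun h => hpj (hac j _ h)
  rw [Finset.sum_congr rfl fun w _ => hterm w, Fintype.sum_prod_type_right]
  simp only [← Finset.sum_mul, (hκ _).2, one_mul]
  simp only [Finset.mul_sum]
  rw [Finset.sum_comm]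
  exact Finset.sum_congr rfl fun j _ =>
    sum_prod_mul p hp1 j (fun b => Real.log (p j b / q j b))

/-- coordinate map -/
def sMap {X Y Z : Type*} (i j : ℕ) (v : X × Y × Z) : X × (Y ⊕ Z) :=
  (v.1, if j < i then Sum.inl v.2.1 else Sum.inr v.2.2)

theorem pushf_hybrid {X Y Z M : Type*}
    [Fintype X] [Fintype Y] [Fintype Z] [Fintype M] (n : ℕ)
    (P : X × Y × Z → ℝ) (κ : (Fin n → X) → M → ℝ) (i : ℕ) :
    pushf (fun w : M × (Fin n → X) × (Fin n → Y) × (Fin n → Z) =>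
            κ w.2.1 w.1 * ∏ j, P (w.2.1 j, w.2.2.1 j, w.2.2.2 j))
      (fun w => (w.1, fun j : Fin n => sMap i j (w.2.1 j, w.2.2.1 j, w.2.2.2 j)))
    = fun w : M × (Fin n → X × (Y ⊕ Z)) =>
        κ (fun j => (w.2 j).1) w.1 * ∏ j : Fin n, pushf P (sMap i j) (w.2 j) := by
  classical
  funext ⟨m, a⟩
  let e : (Fin n → X × Y × Z) ≃ (Fin n → X) × (Fin n → Y) × (Fin n → Z) :=
    { toFun := fun v => (fun j => (v j).1, fun j => (v j).2.1, fun j => (v j).2.2)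
      invFun := fun w j => (w.1 j, w.2.1 j, w.2.2 j)
      left_inv := fun _ => rfl
      right_inv := fun _ => rfl }
  simp only [pushf]
  rw [Finset.prod_univ_sum, Fintype.sum_prod_type]
  simp only [Fintype.piFinset_univ, Finset.mul_sum]
  rw [Finset.sum_eq_single m]
  · rw [← Equiv.sum_comp e]
    refine Finset.sum_congr rfl fun v _ => ?_
    by_cases h : ∀ j : Fin n, sMap i j (v j) = a j
    · have h' : (fun j => (a j).1) = fun j => (v j).1 := by
        funext j; rw [← h j]; rfl
      rw [if_pos (by simp only [Prod.mk.injEq, true_and]; funext j; exact h j)]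
      simp only [h, if_true, h']
      rfl
    · rw [if_neg (by simp only [Prod.mk.injEq, true_and]; exact fun h2 => h fun j => congrFun h2 j)]
      push Not at h
      obtain ⟨j, hj⟩ := h
      rw [Finset.prod_eq_zero (Finset.mem_univ j) (by simp [hj]), mul_zero]
  · intro m' _ hm
    exact Finset.sum_eq_zero fun v _ => by simp [hm]
  · simp

theorem klDiv_sMap_le {X Y Z : Type*} [Fintype X] [Fintype Y] [Fintype Z]
    (P Q : X × Y × Z → ℝ) (hP : IsPMF P) (hQ : IsPMF Q) (i j : ℕ) :
    klDiv (pushf P (sMap i j)) (pushf Q (sMap i j)) ≤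
      if j < i then klDiv (pushf P (fun v => (v.1, v.2.1))) (pushf Q (fun v => (v.1, v.2.1)))
      else klDiv (pushf P (fun v => (v.1, v.2.2))) (pushf Q (fun v => (v.1, v.2.2))) := by
  split_ifs with h
  · have := klDiv_pushf_le _ _ (pushf_nonneg P hP.1 (fun v => (v.1, v.2.1)))
      (pushf_nonneg Q hQ.1 (fun v => (v.1, v.2.1)))
      (fun u => ((u.1, Sum.inl u.2) : X × (Y ⊕ Z)))
    rw [pushf_pushf, pushf_pushf] at this
    have e : (sMap i j : X × Y × Z → X × (Y ⊕ Z)) = fun v => (v.1, Sum.inl v.2.1) := by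
      funext v; simp [sMap, h]
    rw [e]; exact this
  · have := klDiv_pushf_le _ _ (pushf_nonneg P hP.1 (fun v => (v.1, v.2.2)))
      (pushf_nonneg Q hQ.1 (fun v => (v.1, v.2.2)))
      (fun u => ((u.1, Sum.inr u.2) : X × (Y ⊕ Z)))
    rw [pushf_pushf, pushf_pushf] at this
    have e : (sMap i j : X × Y × Z → X × (Y ⊕ Z)) = fun v => (v.1, Sum.inr v.2.2) := by
      funext v; simp [sMap, h]
    rw [e]; exact this

theorem hybrid_main {X Y Z M : Type*}
    [Fintype X] [Fintype Y] [Fintype Z] [Fintype M] (n : ℕ)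
    (P Q : X × Y × Z → ℝ) (hP : IsPMF P) (hQ : IsPMF Q)
    (κ : (Fin n → X) → M → ℝ) (hκ : ∀ x, IsPMF (κ x)) (i : ℕ) (hi : i ≤ n) :
      klDiv
        (pushf (fun w : M × (Fin n → X) × (Fin n → Y) × (Fin n → Z) =>
            κ w.2.1 w.1 * ∏ j, P (w.2.1 j, w.2.2.1 j, w.2.2.2 j))
          (fun w => (w.1, fun j : {j : Fin n // (j : ℕ) < i} => w.2.2.1 j.1,
            fun j : {j : Fin n // i ≤ (j : ℕ)} => w.2.2.2 j.1)))
        (pushf (fun w : M × (Fin n → X) × (Fin n → Y) × (Fin n → Z) =>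
            κ w.2.1 w.1 * ∏ j, Q (w.2.1 j, w.2.2.1 j, w.2.2.2 j))
          (fun w => (w.1, fun j : {j : Fin n // (j : ℕ) < i} => w.2.2.1 j.1,
            fun j : {j : Fin n // i ≤ (j : ℕ)} => w.2.2.2 j.1)))
      ≤ ((i : ℝ) : EReal) *
            klDiv (pushf P (fun v => (v.1, v.2.1))) (pushf Q (fun v => (v.1, v.2.1)))
        + (((n - i : ℕ) : ℝ) : EReal) *
            klDiv (pushf P (fun v => (v.1, v.2.2))) (pushf Q (fun v => (v.1, v.2.2))) := by
  classical
  have hne : Nonempty (X × Y × Z) := by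
    by_contra h
    rw [not_nonempty_iff] at h
    have := hP.2
    simp at this
  obtain ⟨x0, y0, z0⟩ := hne
  let φ : M × (Fin n → X × (Y ⊕ Z)) →
      M × ({j : Fin n // (j : ℕ) < i} → Y) × ({j : Fin n // i ≤ (j : ℕ)} → Z) :=
    fun u => (u.1, fun j => Sum.elim id (fun _ => y0) (u.2 j.1).2,
      fun j => Sum.elim (fun _ => z0) id (u.2 j.1).2)
  have hφ : (fun w : M × (Fin n → X) × (Fin n → Y) × (Fin n → Z) =>
      (w.1, fun j : {j : Fin n // (j : ℕ) < i} => w.2.2.1 j.1,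
            fun j : {j : Fin n // i ≤ (j : ℕ)} => w.2.2.2 j.1))
      = fun w => φ (w.1, fun j : Fin n => sMap i j (w.2.1 j, w.2.2.1 j, w.2.2.2 j)) := by
    funext w
    simp only [φ, Prod.mk.injEq, true_and]
    constructor
    · funext j; simp [sMap, j.2]
    · funext j; simp [sMap, not_lt.mpr j.2]
  rw [hφ, ← pushf_pushf, ← pushf_pushf, pushf_hybrid, pushf_hybrid]
  refine (klDiv_pushf_le _ _ ?_ ?_ φ).trans ?_
  · exact fun w => mul_nonneg ((hκ _).1 _) (Finset.prod_nonneg fun j _ => pushf_nonneg P hP.1 _ _)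
  · exact fun w => mul_nonneg ((hκ _).1 _) (Finset.prod_nonneg fun j _ => pushf_nonneg Q hQ.1 _ _)
  refine (klDiv_prod_le (fun j : Fin n => pushf P (sMap i j)) (fun j : Fin n => pushf Q (sMap i j)) ?_
    (fun a : Fin n → X × (Y ⊕ Z) => κ (fun j => (a j).1)) (fun _ => hκ _)).trans ?_
  · intro j
    have := pushf_sum_mul P (sMap i j) (fun _ => 1)
    simp only [mul_one] at this
    rw [this, hP.2]
  refine (Finset.sum_le_sum fun (j : Fin n) _ => klDiv_sMap_le P Q hP hQ i (j : ℕ)).trans (le_of_eq ?_)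
  generalize klDiv (pushf P (fun v => (v.1, v.2.1))) (pushf Q (fun v => (v.1, v.2.1))) = a
  generalize klDiv (pushf P (fun v => (v.1, v.2.2))) (pushf Q (fun v => (v.1, v.2.2))) = b
  rw [Fin.sum_univ_eq_sum_range (fun j => if j < i then a else b) n]
  obtain ⟨k, rfl⟩ := Nat.exists_eq_add_of_le hi
  rw [Finset.sum_range_add]
  have h1 : ∑ j ∈ Finset.range i, (if j < i then a else b) = i • a := by
    rw [Finset.sum_congr rfl fun j hj => if_pos (Finset.mem_range.mp hj)]; simp
  have h2 : ∑ j ∈ Finset.range k, (if i + j < i then a else b) = k • b := by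
    simp
  rw [h1, h2, EReal.nsmul_eq_mul, EReal.nsmul_eq_mul]
  simp

/-- Hybrid divergence bound:
`D(P_{MY^iZ_{i+1}^n}‖Q_{MY^iZ_{i+1}^n}) ≤ i·D(P_XY‖Q_XY) + (n−i)·D(P_XZ‖Q_XZ)`;
in particular all these divergences are finite when both single-letter divergences are. -/
theorem hybrid_divergence_bound {X Y Z M : Type*}
    [Fintype X] [Fintype Y] [Fintype Z] [Fintype M] (n : ℕ)
    (P Q : X × Y × Z → ℝ) (hP : IsPMF P) (hQ : IsPMF Q)
    (κ : (Fin n → X) → M → ℝ) (hκ : ∀ x, IsPMF (κ x)) :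
    (∀ i : ℕ, i ≤ n →
      klDiv
        (pushf (fun w : M × (Fin n → X) × (Fin n → Y) × (Fin n → Z) =>
            κ w.2.1 w.1 * ∏ j, P (w.2.1 j, w.2.2.1 j, w.2.2.2 j))
          (fun w => (w.1, fun j : {j : Fin n // (j : ℕ) < i} => w.2.2.1 j.1,
            fun j : {j : Fin n // i ≤ (j : ℕ)} => w.2.2.2 j.1)))
        (pushf (fun w : M × (Fin n → X) × (Fin n → Y) × (Fin n → Z) =>
            κ w.2.1 w.1 * ∏ j, Q (w.2.1 j, w.2.2.1 j, w.2.2.2 j))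
          (fun w => (w.1, fun j : {j : Fin n // (j : ℕ) < i} => w.2.2.1 j.1,
            fun j : {j : Fin n // i ≤ (j : ℕ)} => w.2.2.2 j.1)))
      ≤ ((i : ℝ) : EReal) *
            klDiv (pushf P (fun v => (v.1, v.2.1))) (pushf Q (fun v => (v.1, v.2.1)))
        + (((n - i : ℕ) : ℝ) : EReal) *
            klDiv (pushf P (fun v => (v.1, v.2.2))) (pushf Q (fun v => (v.1, v.2.2)))) ∧
    (klDiv (pushf P (fun v => (v.1, v.2.1))) (pushf Q (fun v => (v.1, v.2.1))) < ⊤ →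
     klDiv (pushf P (fun v => (v.1, v.2.2))) (pushf Q (fun v => (v.1, v.2.2))) < ⊤ →
      ∀ i : ℕ, i ≤ n →
        klDiv
          (pushf (fun w : M × (Fin n → X) × (Fin n → Y) × (Fin n → Z) =>
              κ w.2.1 w.1 * ∏ j, P (w.2.1 j, w.2.2.1 j, w.2.2.2 j))
            (fun w => (w.1, fun j : {j : Fin n // (j : ℕ) < i} => w.2.2.1 j.1,
              fun j : {j : Fin n // i ≤ (j : ℕ)} => w.2.2.2 j.1)))
          (pushf (fun w : M × (Fin n → X) × (Fin n → Y) × (Fin n → Z) =>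
              κ w.2.1 w.1 * ∏ j, Q (w.2.1 j, w.2.2.1 j, w.2.2.2 j))
            (fun w => (w.1, fun j : {j : Fin n // (j : ℕ) < i} => w.2.2.1 j.1,
              fun j : {j : Fin n // i ≤ (j : ℕ)} => w.2.2.2 j.1))) < ⊤) := by
  refine ⟨fun i hi => hybrid_main n P Q hP hQ κ hκ i hi, fun h1 h2 i hi =>
    lt_of_le_of_lt (hybrid_main n P Q hP hQ κ hκ i hi) ?_⟩
  have fin : ∀ (k : ℕ) (a : EReal), a ≠ ⊥ → a < ⊤ → ((k : ℝ) : EReal) * a < ⊤ := by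
    intro k a h h'
    lift a to ℝ using ⟨h'.ne, h⟩
    rw [← EReal.coe_mul]
    exact EReal.coe_lt_top _
  exact EReal.add_lt_top (fin _ _ (klDiv_ne_bot _ _) h1).ne (fin _ _ (klDiv_ne_bot _ _) h2).ne


end
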